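/- arXiv:1104.2317 — 2 statements merged into one kernel-verified Lean document; each statement's English description precedes it below -/
import Mathlib

section
/- For every $s \in (0,1)$ and $r > 0$ there exists a constant $C(r,s) < \infty$ such that $\int_{-r}^{r} \|(B - uI)^{-1}\|^s\,du \le C(r,s)$ for every $2 \times 2$ complex matrix $B$ whose imaginary part $\frac{1}{2i}(B - B^*)$ is positive semidefinite or negative semidefinite. -/
open MeasureTheory Matrix
open scoped ComplexOrder

/-!
Split off a unit eigenvector `v`, `T v = μ v`, of a dissipative operator `T` on a finite-dimensional
space. The Cauchy-Schwarz inequality for `Im T` bounds the coupling `⟪v, T x⟫` of `v` to a vector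
`x ⟂ v` by the geometric mean of `Im ⟪v, T v⟫` and `Im ⟪x, T x⟫`, which are controlled by `‖μ - u‖`
and `‖x‖ ‖(u - S) x‖` for the compression `S` of `T` to `vᗮ` and any real `u`. Hence a bound `R`
on `‖(u - S)⁻¹‖` gives the bound `2 (‖μ - u‖⁻¹ + R)` on `‖(u - T)⁻¹‖`; it does not involve `‖T‖`. By
induction on the dimension, `‖(u - T)⁻¹‖` is at most a constant times `∑ i, |u - x i|⁻¹`, where the
`x i` are the real parts of the eigenvalues. Since `t ↦ t ^ s` is subadditive and `|t| ^ (-s)` is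
locally integrable, integrating in `u` gives a bound independent of the `x i`.
-/

section Dissipative

open Module Submodule

variable {E : Type*} [NormedAddCommGroup E] [InnerProductSpace ℂ E]

/-- Operators with positive semidefinite imaginary part, in the sign convention of mathematical
physics: the numerical range lies in the closed upper half-plane. -/
def IsDissipative (T : E →L[ℂ] E) : Prop :=
  ∀ x, 0 ≤ (inner ℂ x (T x)).im

/-- The compression `P_K T|_K` of an operator to a subspace `K`, where `P_K` is the orthogonal
projection; `K` need not be invariant under `T`. -/
noncomputable def compression (K : Submodule ℂ E) [K.HasOrthogonalProjection] (T : E →L[ℂ] E) :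
    K →L[ℂ] K :=
  K.orthogonalProjectionOnto ∘L T ∘L K.subtypeL

lemma inner_compression_apply (K : Submodule ℂ E) [K.HasOrthogonalProjection] (T : E →L[ℂ] E)
    (x y : K) : inner ℂ x (compression K T y) = inner ℂ (x : E) (T y) := by
  simp [compression]

lemma compression_orthogonalProjectionOnto {K : Submodule ℂ E} [K.HasOrthogonalProjection]
    {T : E →L[ℂ] E} (hK : ∀ y ∈ K, T y ∈ K) (z : E) :
    compression Kᗮ T (Kᗮ.orthogonalProjectionOnto z) = Kᗮ.orthogonalProjectionOnto (T z) := by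
  have hker : Kᗮ.orthogonalProjectionOnto (T (K.starProjection z)) = 0 :=
    orthogonalProjectionOnto_orthogonal_apply_eq_zero (hK _ (K.starProjection_apply_mem z))
  conv_rhs => rw [← K.starProjection_add_starProjection_orthogonal z, map_add, map_add, hker,
    zero_add]
  rfl

lemma im_inner_add_smul_apply (T : E →L[ℂ] E) (x y : E) (c : ℂ) :
    (inner ℂ (x + c • y) (T (x + c • y))).im = (inner ℂ x (T x)).im +
      (c * (inner ℂ x (T y) - inner ℂ (T x) y)).im + ‖c‖ ^ 2 * (inner ℂ y (T y)).im := by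
  have hconj : inner ℂ y (T x) = star (inner ℂ (T x) y) := (inner_conj_symm _ _).symm
  simp only [map_add, map_smul, inner_add_left, inner_add_right, inner_smul_left,
    inner_smul_right, hconj, ← Complex.normSq_eq_norm_sq, Complex.normSq_apply, Complex.add_im,
    Complex.add_re, Complex.mul_im, Complex.mul_re, Complex.sub_im, Complex.sub_re,
    Complex.star_def, Complex.conj_im, Complex.conj_re]
  ring

lemma im_inner_apply_le (T : E →L[ℂ] E) (x : E) (u : ℝ) :
    (inner ℂ x (T x)).im ≤ ‖x‖ * ‖(u : ℂ) • x - T x‖ := by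
  have hreal : (inner ℂ x ((u : ℂ) • x)).im = 0 := by
    rw [inner_smul_right, Complex.im_ofReal_mul, ← RCLike.im_eq_complex_im, inner_self_im, mul_zero]
  calc (inner ℂ x (T x)).im = -(inner ℂ x ((u : ℂ) • x - T x)).im := by
        rw [inner_sub_right, Complex.sub_im, hreal, zero_sub, neg_neg]
    _ ≤ ‖inner ℂ x ((u : ℂ) • x - T x)‖ := (neg_le_abs _).trans (Complex.abs_im_le_norm _)
    _ ≤ ‖x‖ * ‖(u : ℂ) • x - T x‖ := norm_inner_le_norm _ _

namespace IsDissipative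

variable {T : E →L[ℂ] E}

lemma isDissipative_compression (hT : IsDissipative T) (K : Submodule ℂ E)
    [K.HasOrthogonalProjection] : IsDissipative (compression K T) := fun x => by
  rw [inner_compression_apply]
  exact hT x

-- The Cauchy-Schwarz inequality for the positive semidefinite form `⟪x, (Im T) y⟫`.
lemma norm_inner_sub_inner_sq_le (hT : IsDissipative T) (x y : E) :
    ‖inner ℂ x (T y) - inner ℂ (T x) y‖ ^ 2 ≤
      4 * (inner ℂ x (T x)).im * (inner ℂ y (T y)).im := by
  set k : ℂ := inner ℂ x (T y) - inner ℂ (T x) y with hk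
  have hdiscrim : discrim (‖k‖ ^ 2 * (inner ℂ y (T y)).im) (‖k‖ ^ 2) (inner ℂ x (T x)).im ≤ 0 := by
    refine discrim_le_zero fun t => (hT (x + (t * (Complex.I * star k)) • y)).trans_eq ?_
    have hphase : (t * (Complex.I * star k) * k).im = t * ‖k‖ ^ 2 := by
      rw [← Complex.normSq_eq_norm_sq, mul_assoc, mul_assoc, Complex.star_def, mul_comm _ k,
        Complex.mul_conj, Complex.im_ofReal_mul, Complex.I_mul_im, Complex.ofReal_re]
    rw [im_inner_add_smul_apply, ← hk, hphase, norm_mul, norm_mul, Complex.norm_I, norm_star,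
      Complex.norm_real, Real.norm_eq_abs, one_mul, mul_pow, sq_abs]
    ring
  rcases eq_or_ne k 0 with hk0 | hk0
  · rw [hk0, norm_zero, zero_pow two_ne_zero, mul_assoc]
    exact mul_nonneg zero_le_four (mul_nonneg (hT x) (hT y))
  · have hk_pos : 0 < ‖k‖ ^ 2 := by positivity
    refine le_of_mul_le_mul_left ?_ hk_pos
    rw [discrim] at hdiscrim
    linarith

lemma norm_inner_apply_sq_le (hT : IsDissipative T) {v : E} {μ : ℂ} (hv : T v = μ • v)
    (x : (ℂ ∙ v)ᗮ) (u : ℝ) :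
    ‖inner ℂ v (T x)‖ ^ 2 ≤ 4 * (‖v‖ * ‖(u : ℂ) • v - T v‖) *
      (‖x‖ * ‖(u : ℂ) • x - compression (ℂ ∙ v)ᗮ T x‖) := by
  have horth : inner ℂ (T v) (x : E) = 0 := by
    rw [hv, inner_smul_left, mem_orthogonal_singleton_iff_inner_right.mp x.2, mul_zero]
  have him : (inner ℂ (x : E) (T x)).im ≤ ‖x‖ * ‖(u : ℂ) • x - compression (ℂ ∙ v)ᗮ T x‖ :=
    inner_compression_apply (ℂ ∙ v)ᗮ T x x ▸ im_inner_apply_le _ x u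
  calc ‖inner ℂ v (T x)‖ ^ 2 = ‖inner ℂ v (T x) - inner ℂ (T v) (x : E)‖ ^ 2 := by
        rw [horth, sub_zero]
    _ ≤ 4 * (inner ℂ v (T v)).im * (inner ℂ (x : E) (T x)).im :=
        hT.norm_inner_sub_inner_sq_le v x
    _ ≤ _ := by
        gcongr
        · exact hT x
        · exact im_inner_apply_le T v u

lemma norm_inner_apply_le (hT : IsDissipative T) {v : E} (hv : ‖v‖ = 1) {μ : ℂ}
    (hTv : T v = μ • v) {u R : ℝ} (hR : 0 ≤ R) {x : (ℂ ∙ v)ᗮ}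
    (hx : ‖x‖ ≤ R * ‖(u : ℂ) • x - compression (ℂ ∙ v)ᗮ T x‖) :
    ‖inner ℂ v (T x)‖ ≤
      (1 + R * ‖μ - u‖) * ‖(u : ℂ) • x - compression (ℂ ∙ v)ᗮ T x‖ := by
  have hvμ : ‖(u : ℂ) • v - T v‖ = ‖μ - u‖ := by
    rw [hTv, ← sub_smul, norm_smul, hv, mul_one, norm_sub_rev]
  have hsq := hT.norm_inner_apply_sq_le hTv x u
  rw [hv, hvμ, one_mul] at hsq
  set y := (u : ℂ) • x - compression (ℂ ∙ v)ᗮ T x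
  refine (abs_le_of_sq_le_sq' ?_ (by positivity)).2
  calc ‖inner ℂ v (T x)‖ ^ 2 ≤ 4 * ‖μ - u‖ * (‖x‖ * ‖y‖) := hsq
    _ ≤ 4 * ‖μ - u‖ * (R * ‖y‖ * ‖y‖) := by gcongr
    _ = 4 * (1 * (R * ‖μ - u‖)) * ‖y‖ ^ 2 := by ring
    _ ≤ (1 + R * ‖μ - u‖) ^ 2 * ‖y‖ ^ 2 := by
        gcongr
        rw [← mul_assoc]
        exact four_mul_le_sq_add 1 _
    _ = ((1 + R * ‖μ - u‖) * ‖y‖) ^ 2 := (mul_pow _ _ 2).symm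

lemma norm_le_of_compression (hT : IsDissipative T) {v : E} (hv : ‖v‖ = 1) {μ : ℂ}
    (hTv : T v = μ • v) {u : ℝ} (hu : μ ≠ u) {R : ℝ} (hR : 0 ≤ R)
    (hcomp : ∀ x : (ℂ ∙ v)ᗮ, ‖x‖ ≤ R * ‖(u : ℂ) • x - compression (ℂ ∙ v)ᗮ T x‖) (z : E) :
    ‖z‖ ≤ 2 * (‖μ - u‖⁻¹ + R) * ‖(u : ℂ) • z - T z‖ := by
  set y : E := (u : ℂ) • z - T z with hy
  set a : ℂ := inner ℂ v z
  set x : (ℂ ∙ v)ᗮ := (ℂ ∙ v)ᗮ.orthogonalProjectionOnto z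
  have hz : z = a • v + x := by
    rw [← starProjection_unit_singleton ℂ hv]
    exact (starProjection_add_starProjection_orthogonal (K := ℂ ∙ v) z).symm
  have hinvt : ∀ w ∈ ℂ ∙ v, T w ∈ ℂ ∙ v := fun w hw => by
    obtain ⟨c, rfl⟩ := mem_span_singleton.mp hw
    rw [map_smul, hTv]
    exact smul_mem _ _ (smul_mem _ _ (mem_span_singleton_self v))
  have hy_le : ‖(u : ℂ) • x - compression (ℂ ∙ v)ᗮ T x‖ ≤ ‖y‖ := by
    rw [compression_orthogonalProjectionOnto hinvt, ← map_smul, ← map_sub]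
    exact norm_orthogonalProjectionOnto_apply_le _ y
  have hx : ‖x‖ ≤ R * ‖y‖ := (hcomp x).trans (by gcongr)
  have ha : a * (u - μ) = inner ℂ v y + inner ℂ v (T x) := by
    have hTz : inner ℂ v (T z) = a * μ + inner ℂ v (T x) := by
      conv_lhs => rw [hz, map_add, map_smul, hTv, smul_smul, inner_add_right, inner_smul_right,
        inner_self_eq_one_of_norm_eq_one hv, mul_one]
    rw [hy, inner_sub_right, hTz, inner_smul_right]
    ring
  have ha_le : ‖a‖ * ‖μ - u‖ ≤ (2 + R * ‖μ - u‖) * ‖y‖ := calc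
    ‖a‖ * ‖μ - u‖ = ‖inner ℂ v y + inner ℂ v (T x)‖ := by rw [← ha, norm_mul, norm_sub_rev]
    _ ≤ ‖v‖ * ‖y‖ + (1 + R * ‖μ - u‖) * ‖y‖ :=
        norm_add_le_of_le (norm_inner_le_norm v y)
          ((hT.norm_inner_apply_le hv hTv hR (hcomp x)).trans (by gcongr))
    _ = (2 + R * ‖μ - u‖) * ‖y‖ := by rw [hv]; ring
  have hμu : 0 < ‖μ - u‖ := norm_pos_iff.mpr (sub_ne_zero.mpr hu)
  calc ‖z‖ ≤ ‖a • v‖ + ‖(x : E)‖ := hz ▸ norm_add_le _ _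
    _ = ‖a‖ + ‖x‖ := by rw [norm_smul, hv, mul_one, coe_norm]
    _ ≤ (2 + R * ‖μ - u‖) * ‖y‖ / ‖μ - u‖ + R * ‖y‖ :=
        add_le_add ((le_div_iff₀ hμu).mpr ha_le) hx
    _ = _ := by field_simp; ring

lemma exists_norm_le_mul_norm_smul_sub (hT : IsDissipative T) [FiniteDimensional ℂ E] :
    ∃ μ : Fin (finrank ℂ E) → ℂ, ∀ u : ℝ, (∀ i, μ i ≠ u) → ∀ z : E,
      ‖z‖ ≤ 2 ^ finrank ℂ E * (∑ i, ‖μ i - u‖⁻¹) * ‖(u : ℂ) • z - T z‖ := by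
  generalize hn : finrank ℂ E = n
  induction n generalizing E with
  | zero =>
    have := finrank_zero_iff.mp hn
    exact ⟨0, fun u _ z => by simp [Subsingleton.elim z 0]⟩
  | succ n ih =>
    have := nontrivial_of_finrank_eq_succ hn
    have : Fact (finrank ℂ E = n + 1) := ⟨hn⟩
    obtain ⟨μ₀, hμ₀⟩ := End.exists_eigenvalue (T : End ℂ E)
    obtain ⟨w, hw⟩ := hμ₀.exists_hasEigenvector
    obtain ⟨v, hv, hTv⟩ : ∃ v : E, ‖v‖ = 1 ∧ T v = μ₀ • v :=
      ⟨(‖w‖⁻¹ : ℂ) • w, norm_smul_inv_norm hw.2, by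
        rw [map_smul, smul_comm μ₀]; exact congrArg _ hw.apply_eq_smul⟩
    have hv0 : v ≠ 0 := norm_ne_zero_iff.mp (hv ▸ one_ne_zero)
    obtain ⟨μ, hμ⟩ := ih (hT.isDissipative_compression (ℂ ∙ v)ᗮ)
      (finrank_orthogonal_span_singleton hv0)
    refine ⟨Fin.cons μ₀ μ, fun u hu z => ?_⟩
    have hu' : μ₀ ≠ u ∧ ∀ i, μ i ≠ u := by simpa [Fin.forall_fin_succ] using hu
    refine (hT.norm_le_of_compression hv hTv hu'.1 (by positivity) (hμ u hu'.2) z).trans ?_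
    refine mul_le_mul_of_nonneg_right ?_ (norm_nonneg _)
    calc 2 * (‖μ₀ - u‖⁻¹ + 2 ^ n * ∑ i, ‖μ i - u‖⁻¹)
        ≤ 2 * (2 ^ n * ‖μ₀ - u‖⁻¹ + 2 ^ n * ∑ i, ‖μ i - u‖⁻¹) := by
          gcongr
          exact le_mul_of_one_le_left (by positivity) (one_le_pow₀ one_le_two)
      _ = 2 ^ (n + 1) * ∑ i, ‖(Fin.cons μ₀ μ : Fin (n + 1) → ℂ) i - u‖⁻¹ := by
          rw [Fin.sum_univ_succ]
          simp only [Fin.cons_zero, Fin.cons_succ]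
          ring

end IsDissipative

end Dissipative

section RingInverse

lemma ringInverse_neg {R : Type*} [Ring R] (a : R) : Ring.inverse (-a) = -Ring.inverse a := by
  have hone : Ring.inverse (-1 : R) = -1 := Ring.inverse_unit (-1 : Rˣ)
  rw [← neg_one_mul, Ring.inverse_mul (.inl isUnit_one.neg), hone, mul_neg_one]

lemma map_ringInverse {F M N : Type*} [MonoidWithZero M] [MonoidWithZero N] [EquivLike F M N]
    [MulEquivClass F M N] (e : F) (a : M) : e (Ring.inverse a) = Ring.inverse (e a) := by
  by_cases ha : IsUnit a
  · rw [← Ring.inverse_mul_cancel_left (e a) (e (Ring.inverse a)) (ha.map e), ← map_mul,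
      Ring.mul_inverse_cancel a ha, map_one, mul_one]
  · rw [Ring.inverse_non_unit _ ha,
      Ring.inverse_non_unit _ (mt (MulEquiv.isUnit_map e).mp ha), map_zero]

lemma resolvent_neg_neg {R A : Type*} [CommRing R] [Ring A] [Algebra R A] (a : A) (r : R) :
    resolvent (-a) (-r) = -resolvent a r := by
  rw [resolvent, resolvent, ← ringInverse_neg, map_neg, neg_sub_neg, neg_sub]

lemma norm_ringInverse_le {𝕜 E : Type*} [NontriviallyNormedField 𝕜] [NormedAddCommGroup E]
    [NormedSpace 𝕜 E] {S : E →L[𝕜] E} {K : ℝ} (hK : 0 ≤ K) (hS : ∀ z, ‖z‖ ≤ K * ‖S z‖) :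
    ‖Ring.inverse S‖ ≤ K := by
  by_cases hunit : IsUnit S
  · refine ContinuousLinearMap.opNorm_le_bound _ hK fun w => ?_
    have hw : S (Ring.inverse S w) = w := DFunLike.congr_fun (Ring.mul_inverse_cancel S hunit) w
    simpa only [hw] using hS (Ring.inverse S w)
  · rwa [Ring.inverse_non_unit _ hunit, norm_zero]

end RingInverse

section FractionalMoment

open Module

lemma rpow_sum_le_sum_rpow {ι : Type*} (t : Finset ι) {f : ι → ℝ} (hf : ∀ i ∈ t, 0 ≤ f i) {p : ℝ}
    (hp : 0 < p) (hp1 : p ≤ 1) : (∑ i ∈ t, f i) ^ p ≤ ∑ i ∈ t, f i ^ p :=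
  Finset.le_sum_of_subadditive_on_pred (fun x : ℝ => x ^ p) (fun x => 0 ≤ x)
    (Real.zero_rpow hp.ne').le
    (fun _ _ ha hb => Real.rpow_add_le_add_rpow ha hb hp.le hp1) (fun _ _ => add_nonneg) f hf

lemma locallyIntegrable_abs_rpow_neg {s : ℝ} (hs : s < 1) :
    LocallyIntegrable fun t : ℝ => |t| ^ (-s) :=
  locallyIntegrable_of_norm_le_rpow (C := 1) (finrank_self ℝ).ge (by simpa using hs)
    (.of_forall fun t => by simp [abs_of_nonneg, Real.rpow_nonneg])
    (measurable_id.abs.pow_const _).aestronglyMeasurable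

lemma abs_rpow_neg_le {s : ℝ} (hs : 0 ≤ s) (t : ℝ) :
    |t| ^ (-s) ≤ 1 + (Set.Icc (-1) 1).indicator (fun t : ℝ => |t| ^ (-s)) t := by
  by_cases ht : t ∈ Set.Icc (-1 : ℝ) 1
  · rw [Set.indicator_of_mem ht]
    exact le_add_of_nonneg_left zero_le_one
  · rw [Set.indicator_of_notMem ht, add_zero]
    exact Real.rpow_le_one_of_one_le_of_nonpos (not_le.mp (mt abs_le.mp ht)).le
      (neg_nonpos.mpr hs)

lemma integrableOn_and_setIntegral_abs_sub_rpow_neg_le {s : ℝ} (hs : s ∈ Set.Ico 0 1) {A : Set ℝ}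
    (hA : volume A ≠ ⊤) (x : ℝ) :
    IntegrableOn (fun u => |u - x| ^ (-s)) A ∧
      ∫ u in A, |u - x| ^ (-s) ≤ volume.real A + ∫ t in Set.Icc (-1 : ℝ) 1, |t| ^ (-s) := by
  set g : ℝ → ℝ := (Set.Icc (-1) 1).indicator fun t => |t| ^ (-s)
  have hg : Integrable g := IntegrableOn.integrable_indicator
    ((locallyIntegrable_abs_rpow_neg hs.2).integrableOn_isCompact isCompact_Icc) measurableSet_Icc
  have hg_nonneg : ∀ t, 0 ≤ g t := fun t =>
    Set.indicator_nonneg (fun t _ => Real.rpow_nonneg (abs_nonneg t) _) t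
  have hone : IntegrableOn (fun _ : ℝ => (1 : ℝ)) A := integrableOn_const hA
  have hgA : IntegrableOn (fun u => g (u - x)) A := (hg.comp_sub_right x).integrableOn
  have hint : IntegrableOn (fun u => |u - x| ^ (-s)) A := by
    refine (hone.add hgA).mono' (Measurable.aestronglyMeasurable (by fun_prop)) ?_
    refine .of_forall fun u => ?_
    rw [Real.norm_of_nonneg (by positivity)]
    exact abs_rpow_neg_le hs.1 (u - x)
  refine ⟨hint, ?_⟩
  calc ∫ u in A, |u - x| ^ (-s) ≤ ∫ u in A, (1 + g (u - x)) :=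
        setIntegral_mono hint (hone.add hgA) fun u => abs_rpow_neg_le hs.1 (u - x)
    _ = volume.real A + ∫ u in A, g (u - x) := by
        rw [integral_add hone hgA, setIntegral_const, smul_eq_mul, mul_one]
    _ ≤ volume.real A + ∫ u, g (u - x) :=
        add_le_add_right
          (setIntegral_le_integral (hg.comp_sub_right x) (.of_forall fun u => hg_nonneg _)) _
    _ = volume.real A + ∫ t in Set.Icc (-1 : ℝ) 1, |t| ^ (-s) := by
        rw [integral_sub_right_eq_self g x, integral_indicator measurableSet_Icc]

variable {E : Type*} [NormedAddCommGroup E] [InnerProductSpace ℂ E] [FiniteDimensional ℂ E]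
  {T : E →L[ℂ] E}

lemma IsDissipative.exists_norm_resolvent_le (hT : IsDissipative T) :
    ∃ x : Fin (finrank ℂ E) → ℝ, ∀ u : ℝ, (∀ i, u ≠ x i) →
      ‖resolvent T (u : ℂ)‖ ≤ 2 ^ finrank ℂ E * ∑ i, |u - x i|⁻¹ := by
  obtain ⟨μ, hμ⟩ := hT.exists_norm_le_mul_norm_smul_sub
  refine ⟨fun i => (μ i).re, fun u hu => ?_⟩
  have hμu : ∀ i, μ i ≠ u := fun i h => hu i (congrArg Complex.re h).symm
  have hre : ∀ i, |u - (μ i).re| ≤ ‖μ i - u‖ := fun i => by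
    simpa [abs_sub_comm] using Complex.abs_re_le_norm (μ i - u)
  calc ‖resolvent T (u : ℂ)‖ ≤ 2 ^ finrank ℂ E * ∑ i, ‖μ i - u‖⁻¹ :=
        norm_ringInverse_le (by positivity) fun z => by
          simpa [Algebra.algebraMap_eq_smul_one] using hμ u hμu z
    _ ≤ 2 ^ finrank ℂ E * ∑ i, |u - (μ i).re|⁻¹ := by
        gcongr with i
        · exact abs_pos.mpr (sub_ne_zero.mpr (hu i))
        · exact hre i

lemma exists_norm_resolvent_le_of_isDissipative_or_neg
    (hT : IsDissipative T ∨ IsDissipative (-T)) :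
    ∃ x : Fin (finrank ℂ E) → ℝ, ∀ u : ℝ, (∀ i, u ≠ x i) →
      ‖resolvent T (u : ℂ)‖ ≤ 2 ^ finrank ℂ E * ∑ i, |u - x i|⁻¹ := by
  rcases hT with hT | hT
  · exact hT.exists_norm_resolvent_le
  · obtain ⟨x, hx⟩ := hT.exists_norm_resolvent_le
    refine ⟨-x, fun u hu => ?_⟩
    have habs : ∀ i, |-u - x i| = |u - (-x) i| := fun i => by
      rw [← abs_neg, Pi.neg_apply, neg_sub', neg_neg]
    simpa only [Complex.ofReal_neg, resolvent_neg_neg, norm_neg, habs] using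
      hx (-u) fun i h => hu i (by rw [Pi.neg_apply, ← h, neg_neg])

lemma measurable_norm_resolvent_rpow (T : E →L[ℂ] E) (s : ℝ) :
    Measurable fun u : ℝ => ‖resolvent T (u : ℂ)‖ ^ s := by
  borelize (E →L[ℂ] E)
  have := FiniteDimensional.complete ℂ E
  exact (measurable_resolvent.comp Complex.measurable_ofReal).norm.pow_const s

lemma exists_ae_norm_resolvent_rpow_le (hT : IsDissipative T ∨ IsDissipative (-T)) {s : ℝ}
    (hs : s ∈ Set.Ioc 0 1) :
    ∃ x : Fin (finrank ℂ E) → ℝ, ∀ᵐ u : ℝ,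
      ‖resolvent T (u : ℂ)‖ ^ s ≤ (2 ^ finrank ℂ E) ^ s * ∑ i, |u - x i| ^ (-s) := by
  obtain ⟨x, hx⟩ := exists_norm_resolvent_le_of_isDissipative_or_neg hT
  refine ⟨x, ?_⟩
  filter_upwards [ae_all_iff.mpr fun i => Measure.ae_ne volume (x i)] with u hu
  calc ‖resolvent T (u : ℂ)‖ ^ s ≤ (2 ^ finrank ℂ E * ∑ i, |u - x i|⁻¹) ^ s :=
        Real.rpow_le_rpow (norm_nonneg _) (hx u hu) hs.1.le
    _ = (2 ^ finrank ℂ E) ^ s * (∑ i, |u - x i|⁻¹) ^ s :=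
        Real.mul_rpow (by positivity) (by positivity)
    _ ≤ (2 ^ finrank ℂ E) ^ s * ∑ i, |u - x i|⁻¹ ^ s := by
        gcongr
        exact rpow_sum_le_sum_rpow _ (fun _ _ => by positivity) hs.1 hs.2
    _ = (2 ^ finrank ℂ E) ^ s * ∑ i, |u - x i| ^ (-s) := by
        simp only [Real.rpow_neg_eq_inv_rpow]

variable (E) in
theorem exists_setIntegral_norm_resolvent_rpow_le {s : ℝ} (hs : s ∈ Set.Ioo 0 1) {A : Set ℝ}
    (hA : volume A ≠ ⊤) :
    ∃ C : ℝ, ∀ T : E →L[ℂ] E, IsDissipative T ∨ IsDissipative (-T) →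
      IntegrableOn (fun u : ℝ => ‖resolvent T (u : ℂ)‖ ^ s) A ∧
        ∫ u in A, ‖resolvent T (u : ℂ)‖ ^ s ≤ C := by
  set J : ℝ := volume.real A + ∫ t in Set.Icc (-1 : ℝ) 1, |t| ^ (-s)
  refine ⟨(2 ^ finrank ℂ E) ^ s * (finrank ℂ E * J), fun T hT => ?_⟩
  obtain ⟨x, hx⟩ := exists_ae_norm_resolvent_rpow_le hT (Set.Ioo_subset_Ioc_self hs)
  have hpole := fun i =>
    integrableOn_and_setIntegral_abs_sub_rpow_neg_le (Set.Ioo_subset_Ico_self hs) hA (x i)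
  have hmajorant : IntegrableOn
      (fun u => (2 ^ finrank ℂ E) ^ s * ∑ i, |u - x i| ^ (-s)) A :=
    (integrable_finsetSum _ fun i _ => (hpole i).1).const_mul _
  have hint : IntegrableOn (fun u : ℝ => ‖resolvent T (u : ℂ)‖ ^ s) A := by
    refine hmajorant.mono' (measurable_norm_resolvent_rpow T s).aestronglyMeasurable ?_
    filter_upwards [ae_restrict_of_ae hx] with u hu
    rwa [Real.norm_of_nonneg (by positivity)]
  refine ⟨hint, ?_⟩
  calc ∫ u in A, ‖resolvent T (u : ℂ)‖ ^ s
      ≤ ∫ u in A, (2 ^ finrank ℂ E) ^ s * ∑ i, |u - x i| ^ (-s) :=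
        integral_mono_ae hint hmajorant (ae_restrict_of_ae hx)
    _ = (2 ^ finrank ℂ E) ^ s * ∑ i, ∫ u in A, |u - x i| ^ (-s) := by
        rw [integral_const_mul, integral_finsetSum _ fun i _ => (hpole i).1]
    _ ≤ (2 ^ finrank ℂ E) ^ s * ∑ _i : Fin (finrank ℂ E), J := by
        gcongr with i
        exact (hpole i).2
    _ = (2 ^ finrank ℂ E) ^ s * (finrank ℂ E * J) := by
        rw [Finset.sum_const, Finset.card_univ, Fintype.card_fin, nsmul_eq_mul]

end FractionalMoment

section Matrix

variable {n : Type*} [Fintype n] [DecidableEq n]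

lemma toEuclideanCLM_inv_sub_smul_one (B : Matrix n n ℂ) (u : ℂ) :
    toEuclideanCLM (𝕜 := ℂ) ((B - u • 1)⁻¹) = -resolvent (toEuclideanCLM (𝕜 := ℂ) B) u := by
  rw [nonsing_inv_eq_ringInverse, map_ringInverse, map_sub, map_smul, map_one, resolvent,
    Algebra.algebraMap_eq_smul_one, ← neg_sub, ringInverse_neg]

lemma isDissipative_toEuclideanCLM {B : Matrix n n ℂ}
    (hB : ((2 * Complex.I)⁻¹ • (B - Bᴴ)).PosSemidef) :
    IsDissipative (toEuclideanCLM (𝕜 := ℂ) B) := fun x => by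
  have hx : 0 ≤ (inner ℂ x (toEuclideanLin ((2 * Complex.I)⁻¹ • (B - Bᴴ)) x)).re :=
    (isPositive_toEuclideanLin_iff.mpr hB).re_inner_nonneg_right x
  have hadj : inner ℂ x ((toEuclideanLin B).adjoint x) =
      starRingEnd ℂ (inner ℂ x (toEuclideanLin B x)) := by
    rw [LinearMap.adjoint_inner_right, inner_conj_symm]
  rwa [map_smul, map_sub, toEuclideanLin_conjTranspose_eq_adjoint, LinearMap.smul_apply,
    LinearMap.sub_apply, inner_smul_right, inner_sub_right, hadj, inv_mul_eq_div,
    ← Complex.im_eq_sub_conj, Complex.ofReal_re] at hx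

lemma isDissipative_toEuclideanCLM_or_neg {B : Matrix n n ℂ}
    (hB : ((2 * Complex.I)⁻¹ • (B - Bᴴ)).PosSemidef ∨
      (-((2 * Complex.I)⁻¹ • (B - Bᴴ))).PosSemidef) :
    IsDissipative (toEuclideanCLM (𝕜 := ℂ) B) ∨ IsDissipative (-toEuclideanCLM (𝕜 := ℂ) B) := by
  refine hB.imp isDissipative_toEuclideanCLM fun hB => ?_
  rw [← map_neg]
  refine isDissipative_toEuclideanCLM ?_
  rwa [conjTranspose_neg, ← neg_sub', smul_neg]

end Matrix

theorem stmt_1_general {n : Type*} [Fintype n] [DecidableEq n] {s : ℝ}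
    (hs : s ∈ Set.Ioo (0 : ℝ) 1) {A : Set ℝ} (hA : volume A ≠ ⊤) :
    ∃ C : ℝ, ∀ B : Matrix n n ℂ,
      (((2 * Complex.I)⁻¹ • (B - Bᴴ)).PosSemidef ∨
        (-((2 * Complex.I)⁻¹ • (B - Bᴴ))).PosSemidef) →
      IntegrableOn
          (fun u : ℝ => ‖toEuclideanCLM (𝕜 := ℂ) ((B - (u : ℂ) • (1 : Matrix n n ℂ))⁻¹)‖ ^ s) A ∧
        ∫ u in A, ‖toEuclideanCLM (𝕜 := ℂ) ((B - (u : ℂ) • (1 : Matrix n n ℂ))⁻¹)‖ ^ s ≤ C := by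
  simp only [toEuclideanCLM_inv_sub_smul_one, norm_neg]
  exact (exists_setIntegral_norm_resolvent_rpow_le (EuclideanSpace ℂ n) hs hA).imp
    fun C hC B hB => hC _ (isDissipative_toEuclideanCLM_or_neg hB)

/-- uniform bound on fractional moments of the resolvent of a
dissipative (or anti-dissipative) 2×2 matrix. -/
theorem stmt_1 (s r : ℝ) (hs : s ∈ Set.Ioo (0 : ℝ) 1) (hr : 0 < r) :
    ∃ C : ℝ, ∀ B : Matrix (Fin 2) (Fin 2) ℂ,
      ((((2 * Complex.I)⁻¹ • (B - Bᴴ)) : Matrix (Fin 2) (Fin 2) ℂ).PosSemidef ∨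
        ((-((2 * Complex.I)⁻¹ • (B - Bᴴ))) : Matrix (Fin 2) (Fin 2) ℂ).PosSemidef) →
      ∫ u in Set.Icc (-r) r,
        ‖Matrix.toEuclideanCLM (𝕜 := ℂ) ((B - (u : ℂ) • (1 : Matrix (Fin 2) (Fin 2) ℂ))⁻¹)‖ ^ s
        ≤ C :=
  (stmt_1_general hs isCompact_Icc.measure_ne_top).imp fun _ hC B hB => (hC B hB).2
end

section
/- (Eigenfunction correlator identity) Let $\mathcal{H}$ be finite-dimensional, $h_0$ self-adjoint with unit cyclic vector $\varphi$, $h_v = h_0 + v\langle\varphi,\cdot\rangle\varphi$, and for $\chi \in \mathcal{H}$, $s \in (0,1)$, open interval $I \subset \mathbb{R}$ define $Q_v(\varphi,\chi;I,s) = \sum_{k: E_k(v)\in I} |\langle\psi_k(v),\varphi\rangle|^{2-s} |\langle\psi_k(v),\chi\rangle|^s$, where $(E_k(v),\psi_k(v))$ are eigenvalue/normalized-eigenvector pairs of $h_v$. Then $\int_{\mathbb{R}} \frac{Q_v(\varphi,\chi;I,s)}{|v|^s}\,dv = \int_I |\langle\varphi, (h_0 - E)^{-1}\chi\rangle|^s\,dE$.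 -/
open MeasureTheory
open scoped InnerProductSpace

/-!
By rank-one perturbation theory, `e` is an eigenvalue of `h + v⟨φ, ·⟩φ` for at most one coupling
`v`, and for at least one unless `e` belongs to the finite spectrum of the compression of `h` to
`φᗮ`. Hence the eigenvalue branches `E k` are injective with disjoint ranges that tile the line up
to finitely many points. Since `(E k)' = |⟨ψ k, φ⟩|²`, changing variables on every branch yields
spectral averaging, `∫ ∑ k, |⟨ψ k v, φ⟩|² g (E k v) dv = ∫ g`. The theorem is the case
`g e = 1_I(e) |⟨φ, (h - e)⁻¹χ⟩|^s`, because pairing the eigenvalue equation with `(h - e)⁻¹χ` gives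
`⟨ψ k v, χ⟩ = -v ⟨ψ k v, φ⟩ ⟨φ, (h - e)⁻¹χ⟩` at `e = E k v`.
-/

open Set Function InnerProductSpace Module.End
open scoped ENNReal

section ChangeOfVariables

lemma measurable_of_forall_hasDerivAt {f f' : ℝ → ℝ} (hf : ∀ x, HasDerivAt f (f' x) x) :
    Measurable f' := by
  have hderiv : deriv f = f' := funext fun x => (hf x).deriv
  exact hderiv ▸ measurable_deriv f

variable {ι : Type*} {f f' : ι → ℝ → ℝ}

theorem lintegral_tsum_abs_deriv_mul_comp [Countable ι]
    (hf : ∀ k x, HasDerivAt (f k) (f' k x) x) (hinj : Injective fun p : ι × ℝ => f p.1 p.2)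
    (hcover : ∀ᵐ y, y ∈ ⋃ k, range (f k)) {g : ℝ → ℝ≥0∞} (hg : Measurable g) :
    ∫⁻ x, ∑' k, ENNReal.ofReal |f' k x| * g (f k x) = ∫⁻ y, g y := by
  have hf_cont (k : ι) : Continuous (f k) :=
    continuous_iff_continuousAt.2 fun x => (hf k x).continuousAt
  have hf_inj (k : ι) : Injective (f k) := fun x y hxy =>
    congrArg Prod.snd (@hinj (k, x) (k, y) hxy)
  have hrange_meas (k : ι) : MeasurableSet (range (f k)) :=
    ((hf_cont k).measurableEmbedding (hf_inj k)).measurableSet_range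
  have hrange_disj : Pairwise (Disjoint on fun k => range (f k)) := fun k j hkj => by
    refine disjoint_left.2 ?_
    rintro _ ⟨x, rfl⟩ ⟨y, hxy⟩
    exact hkj (congrArg Prod.fst (@hinj (j, y) (k, x) hxy)).symm
  have hbranch (k : ι) :
      ∫⁻ x, ENNReal.ofReal |f' k x| * g (f k x) = ∫⁻ y in range (f k), g y := by
    rw [← image_univ, lintegral_image_eq_lintegral_abs_deriv_mul MeasurableSet.univ
      (fun x _ => (hf k x).hasDerivWithinAt) (hf_inj k).injOn, Measure.restrict_univ]
  calc ∫⁻ x, ∑' k, ENNReal.ofReal |f' k x| * g (f k x)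
      = ∑' k, ∫⁻ x, ENNReal.ofReal |f' k x| * g (f k x) :=
        lintegral_tsum fun k =>
          ((measurable_of_forall_hasDerivAt (hf k)).abs.ennreal_ofReal.mul
            (hg.comp (hf_cont k).measurable)).aemeasurable
    _ = ∑' k, ∫⁻ y in range (f k), g y := tsum_congr hbranch
    _ = ∫⁻ y in ⋃ k, range (f k), g y := (lintegral_iUnion hrange_meas hrange_disj g).symm
    _ = ∫⁻ y, g y := by rw [Measure.restrict_eq_self_of_ae_mem hcover]

theorem integral_sum_abs_deriv_mul_comp [Fintype ι]
    (hf : ∀ k x, HasDerivAt (f k) (f' k x) x) (hinj : Injective fun p : ι × ℝ => f p.1 p.2)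
    (hcover : ∀ᵐ y, y ∈ ⋃ k, range (f k)) {g : ℝ → ℝ} (hg : Measurable g) (hg0 : ∀ y, 0 ≤ g y) :
    ∫ x, ∑ k, |f' k x| * g (f k x) = ∫ y, g y := by
  have hterm_nonneg (k : ι) (x : ℝ) : 0 ≤ |f' k x| * g (f k x) :=
    mul_nonneg (abs_nonneg _) (hg0 _)
  have hsum_meas : Measurable fun x => ∑ k, |f' k x| * g (f k x) :=
    Finset.measurable_sum _ fun k _ => (measurable_of_forall_hasDerivAt (hf k)).abs.mul
      (hg.comp (continuous_iff_continuousAt.2 fun x => (hf k x).continuousAt).measurable)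
  rw [integral_eq_lintegral_of_nonneg_ae
      (ae_of_all _ fun x => Finset.sum_nonneg fun k _ => hterm_nonneg k x)
      hsum_meas.aestronglyMeasurable,
    integral_eq_lintegral_of_nonneg_ae (ae_of_all _ hg0) hg.aestronglyMeasurable,
    ← lintegral_tsum_abs_deriv_mul_comp hf hinj hcover hg.ennreal_ofReal]
  congr 1
  refine lintegral_congr fun x => ?_
  rw [ENNReal.ofReal_sum_of_nonneg fun k _ => hterm_nonneg k x, tsum_fintype]
  exact Finset.sum_congr rfl fun k _ => ENNReal.ofReal_mul (abs_nonneg _)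

end ChangeOfVariables

lemma measurable_ringInverse {R : Type*} [NormedRing R] [HasSummableGeomSeries R]
    [MeasurableSpace R] [BorelSpace R] : Measurable (Ring.inverse : R → R) := by
  classical
  have hpiecewise : (Ring.inverse : R → R) = {x | IsUnit x}.piecewise Ring.inverse 0 := by
    ext x
    by_cases hx : IsUnit x
    · exact (piecewise_eq_of_mem {x : R | IsUnit x} _ _ hx).symm
    · rw [piecewise_eq_of_notMem {x : R | IsUnit x} _ _ hx,
        Ring.inverse_non_unit x hx, Pi.zero_apply]
  have hcont : ContinuousOn (Ring.inverse : R → R) {x | IsUnit x} := by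
    rintro _ ⟨u, rfl⟩
    exact (NormedRing.inverse_continuousAt u).continuousWithinAt
  rw [hpiecewise]
  exact hcont.measurable_piecewise continuousOn_const Units.isOpen.measurableSet

section RankOne

variable {𝕜 H : Type*} [RCLike 𝕜] [NormedAddCommGroup H] [InnerProductSpace 𝕜 H]
  {h : H →L[𝕜] H} {φ : H}

/-- The vector `φ` is cyclic for `h`: the orbit `φ, h φ, h² φ, …` spans the whole space. The span
is the algebraic one, which is the usual notion in finite dimension. -/
def IsCyclicVector (h : H →L[𝕜] H) (φ : H) : Prop :=
  Submodule.span 𝕜 (range fun k : ℕ => (h ^ k) φ) = ⊤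

/-- The rank-one perturbation `h_v = h + v ⟨φ, ·⟩ φ` of `h` with coupling constant `v`. -/
noncomputable def rankOnePerturbation (h : H →L[𝕜] H) (φ : H) (v : ℝ) : H →L[𝕜] H :=
  h + (v : 𝕜) • rankOne 𝕜 φ φ

/-- The Green function `⟨φ, (h - z)⁻¹ χ⟩`, with value `0` when `h - z` is not invertible. -/
noncomputable def greenFunction (h : H →L[𝕜] H) (φ χ : H) (z : 𝕜) : 𝕜 :=
  ⟪φ, Ring.inverse (h - z • 1) χ⟫_𝕜

lemma rankOnePerturbation_apply (h : H →L[𝕜] H) (φ : H) (v : ℝ) (x : H) :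
    rankOnePerturbation h φ v x = h x + ((v : 𝕜) * ⟪φ, x⟫_𝕜) • φ := by
  simp [rankOnePerturbation, smul_smul]

lemma rankOnePerturbation_zero (h : H →L[𝕜] H) (φ : H) : rankOnePerturbation h φ 0 = h := by
  simp [rankOnePerturbation]

lemma measurable_greenFunction [CompleteSpace H] (h : H →L[𝕜] H) (φ χ : H) :
    Measurable (greenFunction h φ χ) := by
  borelize H
  have hshift : Continuous fun z : 𝕜 => h - z • (1 : H →L[𝕜] H) := by fun_prop
  have hresolvent : Measurable fun z : 𝕜 => Ring.inverse (h - z • (1 : H →L[𝕜] H)) χ :=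
    (ContinuousLinearMap.measurable_apply χ).comp (measurable_ringInverse.comp hshift.measurable)
  exact (innerSL 𝕜 φ).measurable.comp hresolvent

lemma isUnit_sub_smul_one_of_not_hasEigenvalue [FiniteDimensional 𝕜 H] {z : 𝕜}
    (hz : ¬ HasEigenvalue (h : H →ₗ[𝕜] H) z) : IsUnit (h - z • (1 : H →L[𝕜] H)) := by
  have := FiniteDimensional.complete 𝕜 H
  rw [hasEigenvalue_iff_mem_spectrum, ← ContinuousLinearMap.spectrum_eq, spectrum.notMem_iff,
    Algebra.algebraMap_eq_smul_one] at hz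
  exact IsUnit.sub_iff.1 hz

lemma IsCyclicVector.inner_ne_zero (hcyc : IsCyclicVector h φ)
    (hsymm : (h : H →ₗ[𝕜] H).IsSymmetric) {μ : 𝕜} {x : H}
    (hx : HasEigenvector (h : H →ₗ[𝕜] H) μ x) : ⟪φ, x⟫_𝕜 ≠ 0 := by
  intro hφx
  have horbit (k : ℕ) : ⟪(h ^ k) φ, x⟫_𝕜 = 0 := by
    induction k with
    | zero => simpa using hφx
    | succ k ih =>
      calc ⟪(h ^ (k + 1)) φ, x⟫_𝕜 = ⟪h ((h ^ k) φ), x⟫_𝕜 := by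
            rw [pow_succ', mul_apply_eq_comp]
        _ = ⟪(h ^ k) φ, h x⟫_𝕜 := hsymm _ _
        _ = ⟪(h ^ k) φ, μ • x⟫_𝕜 := congrArg _ hx.apply_eq_smul
        _ = 0 := by rw [inner_smul_right, ih, mul_zero]
  have hspan : ⊤ ≤ (𝕜 ∙ x)ᗮ := hcyc ▸ Submodule.span_le.2 (by
    rintro _ ⟨k, rfl⟩
    exact Submodule.mem_orthogonal_singleton_iff_inner_left.2 (horbit k))
  have hxx : ⟪x, x⟫_𝕜 = 0 :=
    Submodule.mem_orthogonal_singleton_iff_inner_left.1 (hspan Submodule.mem_top)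
  exact hx.2 (inner_self_eq_zero.1 hxx)

lemma IsCyclicVector.inner_ne_zero_of_rankOnePerturbation (hcyc : IsCyclicVector h φ)
    (hsymm : (h : H →ₗ[𝕜] H).IsSymmetric) {v : ℝ} {μ : 𝕜} {x : H}
    (hx : HasEigenvector (rankOnePerturbation h φ v : H →ₗ[𝕜] H) μ x) : ⟪φ, x⟫_𝕜 ≠ 0 := by
  intro hφx
  have hx_h : h x = μ • x := by
    simpa [rankOnePerturbation_apply, hφx] using hx.apply_eq_smul
  exact hcyc.inner_ne_zero hsymm ⟨mem_eigenspace_iff.2 hx_h, hx.2⟩ hφx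

lemma inner_apply_sub_smul_of_hasEigenvector (hsymm : (h : H →ₗ[𝕜] H).IsSymmetric) {v e : ℝ}
    {x : H} (hx : HasEigenvector (rankOnePerturbation h φ v : H →ₗ[𝕜] H) (e : 𝕜) x) (y : H) :
    ⟪x, h y - (e : 𝕜) • y⟫_𝕜 = -(v * ⟪x, φ⟫_𝕜 * ⟪φ, y⟫_𝕜) := by
  have hx_h : h x = (e : 𝕜) • x - ((v : 𝕜) * ⟪φ, x⟫_𝕜) • φ :=
    eq_sub_of_add_eq ((rankOnePerturbation_apply h φ v x).symm.trans hx.apply_eq_smul)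
  have hswap : ⟪x, h y⟫_𝕜 = ⟪h x, y⟫_𝕜 := (hsymm x y).symm
  rw [inner_sub_right, hswap, hx_h, inner_sub_left, inner_smul_left, inner_smul_left,
    inner_smul_right, map_mul, inner_conj_symm, RCLike.conj_ofReal, RCLike.conj_ofReal]
  ring

theorem IsCyclicVector.coupling_eq_of_hasEigenvalue (hcyc : IsCyclicVector h φ)
    (hsymm : (h : H →ₗ[𝕜] H).IsSymmetric) {v w e : ℝ}
    (hv : HasEigenvalue (rankOnePerturbation h φ v : H →ₗ[𝕜] H) (e : 𝕜))
    (hw : HasEigenvalue (rankOnePerturbation h φ w : H →ₗ[𝕜] H) (e : 𝕜)) : v = w := by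
  obtain ⟨x, hx⟩ := hv.exists_hasEigenvector
  obtain ⟨y, hy⟩ := hw.exists_hasEigenvector
  have hφy : ⟪φ, y⟫_𝕜 ≠ 0 := hcyc.inner_ne_zero_of_rankOnePerturbation hsymm hy
  have hxφ : ⟪x, φ⟫_𝕜 ≠ 0 :=
    inner_eq_zero_symm.not.1 (hcyc.inner_ne_zero_of_rankOnePerturbation hsymm hx)
  have hy_h : h y - (e : 𝕜) • y = -((w : 𝕜) * ⟪φ, y⟫_𝕜) • φ := by
    rw [← show rankOnePerturbation h φ w y = (e : 𝕜) • y from hy.apply_eq_smul,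
      rankOnePerturbation_apply]
    module
  have hpair := inner_apply_sub_smul_of_hasEigenvector hsymm hx y
  rw [hy_h, inner_smul_right] at hpair
  have hvw : (v : 𝕜) = w :=
    mul_right_cancel₀ (mul_ne_zero hxφ hφy) (by linear_combination hpair)
  exact RCLike.ofReal_injective hvw

theorem IsCyclicVector.inner_eq_neg_mul_greenFunction [FiniteDimensional 𝕜 H]
    (hcyc : IsCyclicVector h φ) (hsymm : (h : H →ₗ[𝕜] H).IsSymmetric) {v e : ℝ} (hv : v ≠ 0)
    {x : H} (hx : HasEigenvector (rankOnePerturbation h φ v : H →ₗ[𝕜] H) (e : 𝕜) x) (χ : H) :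
    ⟪x, χ⟫_𝕜 = -(v * ⟪x, φ⟫_𝕜 * greenFunction h φ χ e) := by
  have he : ¬ HasEigenvalue (h : H →ₗ[𝕜] H) (e : 𝕜) := fun he =>
    hv (hcyc.coupling_eq_of_hasEigenvalue hsymm (hasEigenvalue_of_hasEigenvector hx)
      (by rwa [rankOnePerturbation_zero]))
  set y := Ring.inverse (h - (e : 𝕜) • (1 : H →L[𝕜] H)) χ
  have hy : h y - (e : 𝕜) • y = χ :=
    DFunLike.congr_fun
      (Ring.mul_inverse_cancel _ (isUnit_sub_smul_one_of_not_hasEigenvalue he)) χ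
  have hpair := inner_apply_sub_smul_of_hasEigenvector hsymm hx y
  rwa [hy] at hpair

lemma IsCyclicVector.norm_inner_rpow_mul_norm_inner_rpow_div_eq [FiniteDimensional 𝕜 H]
    (hcyc : IsCyclicVector h φ) (hsymm : (h : H →ₗ[𝕜] H).IsSymmetric) {v e : ℝ} (hv : v ≠ 0) {x : H}
    (hx : HasEigenvector (rankOnePerturbation h φ v : H →ₗ[𝕜] H) (e : 𝕜) x) (χ : H) (s : ℝ) :
    ‖⟪x, φ⟫_𝕜‖ ^ (2 - s) * ‖⟪x, χ⟫_𝕜‖ ^ s / |v| ^ s =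
      ‖⟪x, φ⟫_𝕜‖ ^ 2 * ‖greenFunction h φ χ (e : 𝕜)‖ ^ s := by
  have hxφ : 0 < ‖⟪x, φ⟫_𝕜‖ := norm_pos_iff.2 <|
    inner_eq_zero_symm.not.1 (hcyc.inner_ne_zero_of_rankOnePerturbation hsymm hx)
  have hxχ : ‖⟪x, χ⟫_𝕜‖ ^ s =
      |v| ^ s * ‖⟪x, φ⟫_𝕜‖ ^ s * ‖greenFunction h φ χ (e : 𝕜)‖ ^ s := by
    rw [hcyc.inner_eq_neg_mul_greenFunction hsymm hv hx χ, norm_neg, norm_mul, norm_mul,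
      RCLike.norm_ofReal, Real.mul_rpow (by positivity) (by positivity),
      Real.mul_rpow (by positivity) (by positivity)]
  rw [hxχ, Real.rpow_sub hxφ, Real.rpow_two]
  field_simp

lemma exists_hasEigenvalue_rankOnePerturbation_or_compression [FiniteDimensional 𝕜 H]
    (hsymm : (h : H →ₗ[𝕜] H).IsSymmetric) (hφ : φ ≠ 0) (e : ℝ) :
    (∃ v : ℝ, HasEigenvalue (rankOnePerturbation h φ v : H →ₗ[𝕜] H) (e : 𝕜)) ∨
      HasEigenvalue ((𝕜 ∙ φ)ᗮ.starProjection ∘L h : H →ₗ[𝕜] H) (e : 𝕜) := by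
  by_cases he : HasEigenvalue (h : H →ₗ[𝕜] H) (e : 𝕜)
  · exact .inl ⟨0, by rwa [rankOnePerturbation_zero]⟩
  obtain ⟨y, hy⟩ : ∃ y, h y - (e : 𝕜) • y = φ :=
    ⟨_, DFunLike.congr_fun
      (Ring.mul_inverse_cancel _ (isUnit_sub_smul_one_of_not_hasEigenvalue he)) φ⟩
  have hy_h : h y = (e : 𝕜) • y + φ := sub_eq_iff_eq_add'.1 hy
  have hy0 : y ≠ 0 := by
    rintro rfl
    exact hφ (by simpa using hy.symm)
  by_cases hφy : ⟪φ, y⟫_𝕜 = 0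
  · right
    refine hasEigenvalue_of_hasEigenvector (x := y) ⟨mem_eigenspace_iff.2 ?_, hy0⟩
    have hy_mem : y ∈ (𝕜 ∙ φ)ᗮ := Submodule.mem_orthogonal_singleton_iff_inner_right.2 hφy
    have hφ_proj : (𝕜 ∙ φ)ᗮ.starProjection φ = 0 :=
      Submodule.starProjection_orthogonal_apply_eq_zero (Submodule.mem_span_singleton_self φ)
    change (𝕜 ∙ φ)ᗮ.starProjection (h y) = (e : 𝕜) • y
    rw [hy_h, map_add, map_smul, hφ_proj, Submodule.starProjection_eq_self_iff.2 hy_mem, add_zero]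
  · left
    -- `⟨φ, y⟩` is real because `h - e` is symmetric, so the coupling `-⟨φ, y⟩⁻¹` is admissible.
    have hφy_real : (starRingEnd 𝕜) ⟪φ, y⟫_𝕜 = ⟪φ, y⟫_𝕜 := by
      have hpair : ⟪h y, y⟫_𝕜 = ⟪y, h y⟫_𝕜 := hsymm y y
      rw [hy_h, inner_add_left, inner_add_right, inner_smul_left, inner_smul_right,
        RCLike.conj_ofReal, add_right_inj] at hpair
      rw [inner_conj_symm, hpair]
    obtain ⟨c, hc⟩ := RCLike.conj_eq_iff_real.1 hφy_real
    rw [hc] at hφy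
    refine ⟨-c⁻¹, hasEigenvalue_of_hasEigenvector (x := y) ⟨mem_eigenspace_iff.2 ?_, hy0⟩⟩
    change rankOnePerturbation h φ (-c⁻¹) y = _
    rw [rankOnePerturbation_apply, hy_h, hc]
    push_cast
    rw [neg_mul, inv_mul_cancel₀ hφy]
    module

theorem finite_setOf_forall_not_hasEigenvalue_rankOnePerturbation [FiniteDimensional 𝕜 H]
    (hsymm : (h : H →ₗ[𝕜] H).IsSymmetric) (hφ : φ ≠ 0) :
    {e : ℝ | ∀ v : ℝ,
      ¬ HasEigenvalue (rankOnePerturbation h φ v : H →ₗ[𝕜] H) (e : 𝕜)}.Finite :=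
  ((finite_hasEigenvalue ((𝕜 ∙ φ)ᗮ.starProjection ∘L h : H →ₗ[𝕜] H)).preimage
    (RCLike.ofReal_injective (K := 𝕜)).injOn).subset fun e he =>
      (exists_hasEigenvalue_rankOnePerturbation_or_compression hsymm hφ e).resolve_left
        (not_exists.2 he)

variable {ι : Type*} {E : ι → ℝ → ℝ} {ψ : ι → ℝ → H}

/-- A parametrization of the spectrum of the family `h_v = h + v ⟨φ, ·⟩ φ` by differentiable
eigenvalue branches `E k` with normalized eigenvectors `ψ k`. The field `hasDerivAt` is the
Feynman–Hellmann formula. -/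
structure IsEigenbranches (h : H →L[𝕜] H) (φ : H) (E : ι → ℝ → ℝ) (ψ : ι → ℝ → H) : Prop where
  injective : ∀ v, Injective fun k => E k v
  norm_eq_one : ∀ k v, ‖ψ k v‖ = 1
  apply_eq_smul : ∀ k v, rankOnePerturbation h φ v (ψ k v) = (E k v : 𝕜) • ψ k v
  exists_eq : ∀ v e : ℝ,
    HasEigenvalue (rankOnePerturbation h φ v : H →ₗ[𝕜] H) (e : 𝕜) → ∃ k, E k v = e
  hasDerivAt : ∀ k v, HasDerivAt (E k) (‖⟪ψ k v, φ⟫_𝕜‖ ^ 2) v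

/-- The eigenfunction correlator
`Q_v(φ, χ; I, s) = ∑_{k : E_k(v) ∈ I} |⟨ψ_k(v), φ⟩|^(2-s) |⟨ψ_k(v), χ⟩|^s`. -/
noncomputable def eigenfunctionCorrelator (𝕜 : Type*) {H : Type*} [RCLike 𝕜]
    [NormedAddCommGroup H] [InnerProductSpace 𝕜 H] {ι : Type*} [Fintype ι] (E : ι → ℝ → ℝ)
    (ψ : ι → ℝ → H) (φ χ : H) (I : Set ℝ) [DecidablePred (· ∈ I)] (s v : ℝ) : ℝ :=
  ∑ k, if E k v ∈ I then ‖⟪ψ k v, φ⟫_𝕜‖ ^ (2 - s) * ‖⟪ψ k v, χ⟫_𝕜‖ ^ s else 0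

namespace IsEigenbranches

lemma hasEigenvector (hB : IsEigenbranches h φ E ψ) (k : ι) (v : ℝ) :
    HasEigenvector (rankOnePerturbation h φ v : H →ₗ[𝕜] H) (E k v : 𝕜) (ψ k v) :=
  ⟨mem_eigenspace_iff.2 (hB.apply_eq_smul k v), norm_ne_zero_iff.1 (by simp [hB.norm_eq_one])⟩

lemma injective_uncurry (hB : IsEigenbranches h φ E ψ) (hcyc : IsCyclicVector h φ)
    (hsymm : (h : H →ₗ[𝕜] H).IsSymmetric) : Injective fun p : ι × ℝ => E p.1 p.2 := by
  rintro ⟨k, v⟩ ⟨j, w⟩ (hE : E k v = E j w)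
  obtain rfl : v = w := hcyc.coupling_eq_of_hasEigenvalue hsymm
    (hasEigenvalue_of_hasEigenvector (hB.hasEigenvector k v))
    (hE ▸ hasEigenvalue_of_hasEigenvector (hB.hasEigenvector j w))
  rw [hB.injective v hE]

variable [FiniteDimensional 𝕜 H]

lemma ae_mem_iUnion_range (hB : IsEigenbranches h φ E ψ)
    (hsymm : (h : H →ₗ[𝕜] H).IsSymmetric) (hφ : φ ≠ 0) : ∀ᵐ e, e ∈ ⋃ k, range (E k) := by
  have hfinite := finite_setOf_forall_not_hasEigenvalue_rankOnePerturbation hsymm hφ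
  refine (measure_eq_zero_iff_ae_notMem.1 (hfinite.measure_zero volume)).mono fun e he => ?_
  obtain ⟨v, hv⟩ := not_forall_not.1 he
  obtain ⟨k, hk⟩ := hB.exists_eq v e hv
  exact mem_iUnion.2 ⟨k, v, hk⟩

theorem integral_sum_norm_inner_sq_mul_comp [Fintype ι] (hB : IsEigenbranches h φ E ψ)
    (hcyc : IsCyclicVector h φ) (hsymm : (h : H →ₗ[𝕜] H).IsSymmetric) (hφ : φ ≠ 0)
    {g : ℝ → ℝ} (hg : Measurable g) (hg0 : ∀ e, 0 ≤ g e) :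
    ∫ v, ∑ k, ‖⟪ψ k v, φ⟫_𝕜‖ ^ 2 * g (E k v) = ∫ e, g e := by
  simpa only [abs_pow, abs_norm] using integral_sum_abs_deriv_mul_comp hB.hasDerivAt
    (hB.injective_uncurry hcyc hsymm) (hB.ae_mem_iUnion_range hsymm hφ) hg hg0

lemma eigenfunctionCorrelator_div_eq [Fintype ι] (hB : IsEigenbranches h φ E ψ)
    (hcyc : IsCyclicVector h φ) (hsymm : (h : H →ₗ[𝕜] H).IsSymmetric) (χ : H) (I : Set ℝ)
    [DecidablePred (· ∈ I)] (s : ℝ) {v : ℝ} (hv : v ≠ 0) :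
    eigenfunctionCorrelator 𝕜 E ψ φ χ I s v / |v| ^ s = ∑ k, ‖⟪ψ k v, φ⟫_𝕜‖ ^ 2 *
      I.indicator (fun e : ℝ => ‖greenFunction h φ χ (e : 𝕜)‖ ^ s) (E k v) := by
  rw [eigenfunctionCorrelator, Finset.sum_div]
  refine Finset.sum_congr rfl fun k _ => ?_
  by_cases hk : E k v ∈ I
  · rw [if_pos hk, indicator_of_mem hk]
    exact hcyc.norm_inner_rpow_mul_norm_inner_rpow_div_eq hsymm hv (hB.hasEigenvector k v) χ s
  · rw [if_neg hk, indicator_of_notMem hk, zero_div, mul_zero]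

end IsEigenbranches

theorem stmt_16_general [FiniteDimensional 𝕜 H] [Fintype ι]
    (hsymm : (h : H →ₗ[𝕜] H).IsSymmetric) (hcyc : IsCyclicVector h φ) (hφ : φ ≠ 0)
    (hB : IsEigenbranches h φ E ψ) (χ : H) {I : Set ℝ} [DecidablePred (· ∈ I)]
    (hI : MeasurableSet I) (s : ℝ) :
    ∫ v, eigenfunctionCorrelator 𝕜 E ψ φ χ I s v / |v| ^ s =
      ∫ e in I, ‖greenFunction h φ χ (e : 𝕜)‖ ^ s := by
  have := FiniteDimensional.complete 𝕜 H
  set G : ℝ → ℝ := fun e => ‖greenFunction h φ χ (e : 𝕜)‖ ^ s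
  have hG : Measurable G :=
    ((measurable_greenFunction h φ χ).comp RCLike.measurable_ofReal).norm.pow_const s
  calc ∫ v, eigenfunctionCorrelator 𝕜 E ψ φ χ I s v / |v| ^ s
      = ∫ v, ∑ k, ‖⟪ψ k v, φ⟫_𝕜‖ ^ 2 * I.indicator G (E k v) :=
        integral_congr_ae <| (Measure.ae_ne volume 0).mono fun v hv =>
          hB.eigenfunctionCorrelator_div_eq hcyc hsymm χ I s hv
    _ = ∫ e, I.indicator G e := hB.integral_sum_norm_inner_sq_mul_comp hcyc hsymm hφ
        (hG.indicator hI) (indicator_nonneg fun e _ => Real.rpow_nonneg (norm_nonneg _) s)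
    _ = ∫ e in I, G e := integral_indicator hI

end RankOne

/-- the eigenfunction correlator identity (Proposition A.2):
`∫ Q_v(φ,χ;I,s)/|v|^s dv = ∫_I |⟨φ,(h₀-E)⁻¹χ⟩|^s dE` for the rank-one family
`h_v = h_0 + v⟨φ,·⟩φ` with cyclic unit vector `φ`, `I = (a,b)`. -/
theorem stmt_16 (N : ℕ)
    (h0 : EuclideanSpace ℂ (Fin N) →L[ℂ] EuclideanSpace ℂ (Fin N))
    (hsa : IsSelfAdjoint h0) (φ χ : EuclideanSpace ℂ (Fin N)) (hφ : ‖φ‖ = 1)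
    (hcyc : ⊤ ≤ Submodule.span ℂ (Set.range fun k : ℕ => (h0 ^ k) φ))
    (s a b : ℝ) (hs : s ∈ Set.Ioo (0 : ℝ) 1)
    (E : Fin N → ℝ → ℝ) (ψ : Fin N → ℝ → EuclideanSpace ℂ (Fin N))
    (hmono : ∀ v : ℝ, StrictMono fun k => E k v)
    (heig : ∀ (k : Fin N) (v : ℝ), ‖ψ k v‖ = 1 ∧
      (h0 + (v : ℂ) • (innerSL ℂ φ).smulRight φ) (ψ k v) = (E k v : ℂ) • ψ k v)
    (hall : ∀ (v : ℝ) (μ : ℂ),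
      Module.End.HasEigenvalue
        ((h0 + (v : ℂ) • (innerSL ℂ φ).smulRight φ).toLinearMap) μ → ∃ k, μ = (E k v : ℂ))
    (hderiv : ∀ (k : Fin N) (v : ℝ), HasDerivAt (E k) (‖(⟪ψ k v, φ⟫_ℂ)‖ ^ 2) v) :
    ∫ v : ℝ,
        (∑ k : Fin N, if E k v ∈ Set.Ioo a b then
          ‖(⟪ψ k v, φ⟫_ℂ)‖ ^ (2 - s) * ‖(⟪ψ k v, χ⟫_ℂ)‖ ^ s else 0) / |v| ^ s
      = ∫ En in Set.Ioo a b,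
          ‖(⟪φ, Ring.inverse (h0 - (En : ℂ) • 1) χ⟫_ℂ)‖ ^ s := by
  have hB : IsEigenbranches h0 φ E ψ :=
    ⟨fun v => (hmono v).injective, fun k v => (heig k v).1, fun k v => (heig k v).2,
      fun v e he => (hall v e he).imp fun k hk => Complex.ofReal_injective hk.symm, hderiv⟩
  exact stmt_16_general hsa.isSymmetric (top_le_iff.1 hcyc) (norm_ne_zero_iff.1 (by simp [hφ])) hB χ
    measurableSet_Ioo s
end
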